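/- Let k ≥ 1 and let γ be an integer with −k ≤ γ ≤ −1. Then the left ideal J = A₁(Y∂ − γ) + A₁Y^k satisfies J = A₁(Y∂ − γ) + A₁Y^{|γ|}, and J is a maximal left ideal of A₁ (equivalently, A₁/J is a simple A₁-module, isomorphic to ℂ[y]_y/ℂ[y]). -/

import Mathlib

set_option synthInstance.maxHeartbeats 1000000
set_option maxHeartbeats 1000000

/-- Multiplication by the variable `y`, as an endomorphism of `ℂ[y]`. -/
noncomputable def Yop : Module.End ℂ (Polynomial ℂ) := LinearMap.mulLeft ℂ Polynomial.X

/-- The formal derivative `∂`, as an endomorphism of `ℂ[y]`. -/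
noncomputable def Dop : Module.End ℂ (Polynomial ℂ) :=
  (Polynomial.derivative : Polynomial ℂ →ₗ[ℂ] Polynomial ℂ)

/-- The Weyl algebra `A₁`, realized as the ℂ-subalgebra of `End_ℂ(ℂ[y])` generated by
`Y` and `∂`. -/
noncomputable def A1 : Subalgebra ℂ (Module.End ℂ (Polynomial ℂ)) :=
  Algebra.adjoin ℂ {Yop, Dop}

/-- `Y` and `∂` as elements of `A₁`. -/
noncomputable def wY : A1 := ⟨Yop, Algebra.subset_adjoin (by simp)⟩
noncomputable def wD : A1 := ⟨Dop, Algebra.subset_adjoin (by simp)⟩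


open Polynomial

section WeylRelation

variable {A : Type*} [Ring A] [Algebra ℂ A] {y d : A}

lemma mul_pow_succ_of_weyl (h : d * y = y * d + 1) (n : ℕ) :
    d * y ^ (n + 1) = y ^ n * (y * d) + ((n : ℂ) + 1) • y ^ n := by
  induction n with
  | zero => simp [h]
  | succ n ih =>
    rw [pow_succ, ← mul_assoc, ih]
    simp only [add_mul, smul_mul_assoc, mul_assoc, h, mul_add, mul_one, pow_succ, Nat.cast_succ]
    module

lemma mul_pow_succ_of_weyl' (h : d * y = y * d + 1) (n : ℕ) :
    y * d ^ (n + 1) = d ^ (n + 1) * y - ((n : ℂ) + 1) • d ^ n := by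
  have h' : y * d = d * y - 1 := by rw [h, add_sub_cancel_right]
  induction n with
  | zero => simp [h']
  | succ n ih =>
    rw [pow_succ, ← mul_assoc, ih]
    simp only [sub_mul, smul_mul_assoc, mul_assoc, h', mul_sub, mul_one, pow_succ, Nat.cast_succ]
    module

variable {J : Ideal A} {m : ℕ}

lemma Ideal.complex_smul_mem {I : Ideal A} (c : ℂ) {x : A} (hx : x ∈ I) : c • x ∈ I := by
  rw [Algebra.smul_def]
  exact I.mul_mem_left _ hx

lemma Ideal.mem_of_complex_smul_mem {I : Ideal A} {c : ℂ} (hc : c ≠ 0) {x : A}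
    (hx : c • x ∈ I) : x ∈ I := by
  simpa [smul_smul, hc] using Ideal.complex_smul_mem c⁻¹ hx

/-- Modulo a left ideal containing `y d + m`, the operator `d` lowers powers of `y`. -/
lemma mul_pow_succ_sub_mem (h : d * y = y * d + 1) (hE : y * d + algebraMap ℂ A m ∈ J) (n : ℕ) :
    d * y ^ (n + 1) - ((n : ℂ) + 1 - m) • y ^ n ∈ J := by
  convert J.mul_mem_left (y ^ n) hE using 1
  rw [mul_pow_succ_of_weyl h, mul_add, ← Algebra.commutes, ← Algebra.smul_def]
  module

lemma pow_mem_of_pow_add_mem (h : d * y = y * d + 1) (hE : y * d + algebraMap ℂ A m ∈ J) (n : ℕ)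
    (hn : y ^ (m + n) ∈ J) : y ^ m ∈ J := by
  induction n with
  | zero => exact hn
  | succ n ih =>
    refine ih (Ideal.mem_of_complex_smul_mem (c := (n : ℂ) + 1) (Nat.cast_add_one_ne_zero n) ?_)
    have := J.sub_mem (J.mul_mem_left d hn) (mul_pow_succ_sub_mem h hE (m + n))
    convert this using 1
    rw [← add_assoc]
    push_cast
    module

lemma span_euler_pow_add (h : d * y = y * d + 1) (m n : ℕ) :
    (Ideal.span {y * d + algebraMap ℂ A m, y ^ (m + n)} : Ideal A)
      = Ideal.span {y * d + algebraMap ℂ A m, y ^ m} := by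
  apply le_antisymm <;> rw [Ideal.span_le, Set.pair_subset_iff]
  · refine ⟨Ideal.subset_span (Set.mem_insert _ _), ?_⟩
    rw [add_comm m n, pow_add]
    exact Ideal.mul_mem_left _ _ (Ideal.subset_span (Set.mem_insert_of_mem _ rfl))
  · have hE := Ideal.subset_span (Set.mem_insert (y * d + algebraMap ℂ A m) {y ^ (m + n)})
    exact ⟨hE, pow_mem_of_pow_add_mem h hE n
      (Ideal.subset_span (Set.mem_insert_of_mem _ rfl))⟩

/-- For `n < m`, the product `dⁿ yⁿ` is a nonzero scalar modulo `J`. -/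
lemma exists_smul_one_sub_mem (h : d * y = y * d + 1) (hE : y * d + algebraMap ℂ A m ∈ J) (n : ℕ)
    (hn : n < m) : ∃ c : ℂ, c ≠ 0 ∧ d ^ n * y ^ n - c • 1 ∈ J := by
  induction n with
  | zero => exact ⟨1, one_ne_zero, by simp⟩
  | succ n ih =>
    obtain ⟨c, hc, hmem⟩ := ih (by omega)
    have hnm : (n : ℂ) + 1 - m ≠ 0 := by
      rw [sub_ne_zero]
      exact_mod_cast hn.ne
    refine ⟨((n : ℂ) + 1 - m) * c, mul_ne_zero hnm hc, ?_⟩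
    have := J.add_mem (J.mul_mem_left (d ^ n) (mul_pow_succ_sub_mem h hE n))
      (Ideal.complex_smul_mem ((n : ℂ) + 1 - m) hmem)
    convert this using 1
    rw [pow_succ d, mul_assoc, mul_sub, mul_smul_comm, mul_smul]
    module

variable {r : ℕ}

lemma mul_pow_mul_add_smul_mem (h : d * y = y * d + 1) (hy : y ^ (r + 1) ∈ J) (n : ℕ) :
    y * (d ^ (n + 1) * y ^ r) + ((n : ℂ) + 1) • (d ^ n * y ^ r) ∈ J := by
  convert J.mul_mem_left (d ^ (n + 1)) hy using 1
  rw [← mul_assoc, mul_pow_succ_of_weyl' h, sub_mul, smul_mul_assoc, mul_assoc, ← pow_succ']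
  module

lemma coeff_eq_zero_or_pow_mem (h : d * y = y * d + 1) (hy : y ^ (r + 1) ∈ J) (N : ℕ)
    (c : ℕ → ℂ) (hc : ∑ n ∈ Finset.range N, c n • (d ^ n * y ^ r) ∈ J) :
    (∀ n < N, c n = 0) ∨ y ^ r ∈ J := by
  induction N generalizing c with
  | zero => simp
  | succ N ih =>
    have hlow : ∑ n ∈ Finset.range N, (c (n + 1) * ((n : ℂ) + 1)) • (d ^ n * y ^ r) ∈ J := by
      have hsum : ∑ n ∈ Finset.range N, c (n + 1) •
          (y * (d ^ (n + 1) * y ^ r) + ((n : ℂ) + 1) • (d ^ n * y ^ r)) ∈ J :=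
        J.sum_mem fun n _ => Ideal.complex_smul_mem _ (mul_pow_mul_add_smul_mem h hy n)
      have hmul := J.mul_mem_left y hc
      rw [Finset.sum_range_succ', mul_add, Finset.mul_sum] at hmul
      have hzero : y * (c 0 • (d ^ 0 * y ^ r)) ∈ J := by
        rw [mul_smul_comm, pow_zero, one_mul, ← pow_succ']
        exact Ideal.complex_smul_mem _ hy
      have := J.sub_mem hsum ((J.add_mem_iff_left hzero).1 hmul)
      simpa [smul_add, Finset.sum_add_distrib, mul_smul] using this
    rcases ih _ hlow with h0 | h0
    · have hvan : ∀ n < N, c (n + 1) = 0 := fun n hn =>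
        (mul_eq_zero.1 (h0 n hn)).resolve_right (Nat.cast_add_one_ne_zero n)
      by_cases hc0 : c 0 = 0
      · left
        rintro (_ | n) hn
        · exact hc0
        · exact hvan n (by omega)
      · right
        rw [Finset.sum_range_succ', Finset.sum_eq_zero fun n hn => by
          rw [hvan n (Finset.mem_range.1 hn), zero_smul]] at hc
        exact Ideal.mem_of_complex_smul_mem hc0 (by simpa using hc)
    · exact Or.inr h0

/-- Modulo `J`, the elements `dⁿ y ^ r` span an algebra generated by `y` and `d`. -/
lemma exists_sub_sum_mem (h : d * y = y * d + 1) (hr : r + 1 = m)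
    (hE : y * d + algebraMap ℂ A m ∈ J) (hy : y ^ (r + 1) ∈ J)
    (hgen : ∀ S : Submodule ℂ A, 1 ∈ S → (∀ s ∈ S, y * s ∈ S) → (∀ s ∈ S, d * s ∈ S) → S = ⊤)
    (a : A) : ∃ (N : ℕ) (c : ℕ → ℂ),
      a - ∑ n ∈ Finset.range N, c n • (d ^ n * y ^ r) ∈ J := by
  set T : Submodule ℂ A := Submodule.span ℂ (Set.range fun n : ℕ => d ^ n * y ^ r)
  have heT (n : ℕ) : d ^ n * y ^ r ∈ T := Submodule.subset_span ⟨n, rfl⟩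
  have hTy : ∀ t ∈ T, ∃ t' ∈ T, y * t - t' ∈ J := by
    intro t ht
    induction ht using Submodule.span_induction with
    | mem x hx =>
      obtain ⟨n, rfl⟩ := hx
      rcases n with _ | n
      · exact ⟨0, T.zero_mem, by simpa [← pow_succ'] using hy⟩
      · exact ⟨_, T.neg_mem (T.smul_mem ((n : ℂ) + 1) (heT n)), by
          simpa using mul_pow_mul_add_smul_mem h hy n⟩
    | zero => exact ⟨0, T.zero_mem, by simp⟩
    | add x z _ _ hx hz =>
      obtain ⟨x', hx', hxJ⟩ := hx
      obtain ⟨z', hz', hzJ⟩ := hz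
      refine ⟨_, T.add_mem hx' hz', ?_⟩
      convert J.add_mem hxJ hzJ using 1
      noncomm_ring
    | smul c x _ hx =>
      obtain ⟨x', hx', hxJ⟩ := hx
      refine ⟨_, T.smul_mem c hx', ?_⟩
      simpa [smul_sub] using Ideal.complex_smul_mem c hxJ
  have hTd : ∀ t ∈ T, d * t ∈ T := by
    intro t ht
    induction ht using Submodule.span_induction with
    | mem x hx =>
      obtain ⟨n, rfl⟩ := hx
      simpa [pow_succ', mul_assoc] using heT (n + 1)
    | zero => simp
    | add x z _ _ hx hz => simpa [mul_add] using T.add_mem hx hz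
    | smul c x _ hx => simpa using T.smul_mem c hx
  have htop := hgen (T ⊔ J.restrictScalars ℂ) ?_ ?_ ?_
  · obtain ⟨t, ht, j, hj, htj⟩ := Submodule.mem_sup.1 (htop ▸ Submodule.mem_top (x := a))
    obtain ⟨c, rfl⟩ := Finsupp.mem_span_range_iff_exists_finsupp.1 ht
    refine ⟨c.support.sup id + 1, c, ?_⟩
    rw [Finsupp.sum_of_support_subset c (s := Finset.range (c.support.sup id + 1))
      (fun n hn => Finset.mem_range.2 (Nat.lt_succ_of_le (Finset.le_sup (f := id) hn))) _
      (by simp)] at htj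
    rw [← htj, add_sub_cancel_left]
    exact hj
  · obtain ⟨c, hc, hmem⟩ := exists_smul_one_sub_mem h hE r (by omega)
    refine Submodule.mem_sup.2 ⟨c⁻¹ • (d ^ r * y ^ r), T.smul_mem _ (heT r), _,
      Ideal.complex_smul_mem (-c⁻¹) hmem, ?_⟩
    simp [smul_sub, smul_smul, hc]
  · intro s hs
    obtain ⟨t, ht, j, hj, rfl⟩ := Submodule.mem_sup.1 hs
    obtain ⟨t', ht', hJ'⟩ := hTy t ht
    refine Submodule.mem_sup.2 ⟨t', ht', _, J.add_mem hJ' (J.mul_mem_left y hj), ?_⟩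
    noncomm_ring
  · intro s hs
    obtain ⟨t, ht, j, hj, rfl⟩ := Submodule.mem_sup.1 hs
    exact Submodule.mem_sup.2 ⟨_, hTd t ht, _, J.mul_mem_left d hj, (mul_add _ _ _).symm⟩

lemma isMaximal_of_weyl (h : d * y = y * d + 1) (hr : r + 1 = m)
    (hE : y * d + algebraMap ℂ A m ∈ J) (hy : y ^ (r + 1) ∈ J) (hJ : J ≠ ⊤)
    (hgen : ∀ S : Submodule ℂ A, 1 ∈ S → (∀ s ∈ S, y * s ∈ S) → (∀ s ∈ S, d * s ∈ S) → S = ⊤) :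
    J.IsMaximal := by
  refine Ideal.isMaximal_def.2 ⟨hJ, fun I hI => ?_⟩
  obtain ⟨a, haI, haJ⟩ := SetLike.exists_of_lt hI
  obtain ⟨N, c, hc⟩ := exists_sub_sum_mem h hr hE hy hgen a
  have hcI : ∑ n ∈ Finset.range N, c n • (d ^ n * y ^ r) ∈ I := by
    simpa using I.sub_mem haI (hI.le hc)
  rcases coeff_eq_zero_or_pow_mem h (hI.le hy) N c hcI with h0 | h0
  · refine absurd ?_ haJ
    rwa [Finset.sum_eq_zero fun n hn => by rw [h0 n (Finset.mem_range.1 hn), zero_smul],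
      sub_zero] at hc
  · obtain ⟨u, hu, hmem⟩ := exists_smul_one_sub_mem h hE r (by omega)
    refine (Ideal.eq_top_iff_one I).2 (Ideal.mem_of_complex_smul_mem hu ?_)
    simpa using I.sub_mem (I.mul_mem_left (d ^ r) h0) (hI.le hmem)

end WeylRelation

lemma wD_mul_wY : wD * wY = wY * wD + 1 := by
  apply Subtype.ext
  change Dop * Yop = Yop * Dop + 1
  refine LinearMap.ext fun p => ?_
  simp [Dop, Yop, add_comm]

lemma A1_submodule_eq_top (S : Submodule ℂ A1) (h1 : 1 ∈ S) (hY : ∀ s ∈ S, wY * s ∈ S)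
    (hD : ∀ s ∈ S, wD * s ∈ S) : S = ⊤ := by
  have key : ∀ (x : Module.End ℂ ℂ[X]) (hx : x ∈ A1), ∀ s ∈ S, (⟨x, hx⟩ : A1) * s ∈ S := by
    intro x hx
    induction hx using Algebra.adjoin_induction with
    | mem x hx =>
      rcases hx with rfl | rfl
      · exact hY
      · exact hD
    | algebraMap c =>
      intro s hs
      have := S.smul_mem c hs
      rwa [Algebra.smul_def] at this
    | add x z hx hz ihx ihz =>
      intro s hs
      have := S.add_mem (ihx s hs) (ihz s hs)
      rwa [← add_mul] at this
    | mul x z hx hz ihx ihz =>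
      intro s hs
      have := ihx _ (ihz s hs)
      rwa [← mul_assoc] at this
  exact eq_top_iff.2 fun a _ => by simpa using key a.1 a.2 1 h1

/-- The coefficient of `yⁿ` for an integer exponent `n`, zero when `n` is negative. -/
noncomputable def intCoeff (n : ℤ) : ℂ[X] →ₗ[ℂ] ℂ :=
  if 0 ≤ n then lcoeff ℂ n.toNat else 0

lemma intCoeff_natCast (n : ℕ) (p : ℂ[X]) : intCoeff n p = p.coeff n := by
  simp [intCoeff]

lemma intCoeff_of_neg {n : ℤ} (hn : n < 0) (p : ℂ[X]) : intCoeff n p = 0 := by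
  simp [intCoeff, not_le.2 hn]

lemma intCoeff_X_mul (n : ℤ) (p : ℂ[X]) : intCoeff n (X * p) = intCoeff (n - 1) p := by
  rcases lt_or_ge n 0 with hn | hn
  · rw [intCoeff_of_neg hn, intCoeff_of_neg (by omega)]
  · obtain ⟨n, rfl⟩ := Int.eq_ofNat_of_zero_le hn
    rcases n with _ | n
    · rw [intCoeff_natCast, intCoeff_of_neg (by simp), coeff_X_mul_zero]
    · rw [intCoeff_natCast, coeff_X_mul, Nat.cast_succ, add_sub_cancel_right, intCoeff_natCast]

lemma intCoeff_derivative (n : ℤ) (p : ℂ[X]) :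
    intCoeff n (derivative p) = (n + 1) * intCoeff (n + 1) p := by
  rcases lt_or_ge n 0 with hn | hn
  · rw [intCoeff_of_neg hn]
    rcases (show n + 1 ≤ 0 by omega).lt_or_eq with hn' | hn'
    · rw [intCoeff_of_neg hn', mul_zero]
    · have : (n : ℂ) + 1 = 0 := by exact_mod_cast hn'
      rw [this, zero_mul]
  · obtain ⟨n, rfl⟩ := Int.eq_ofNat_of_zero_le hn
    have := intCoeff_natCast (n + 1) p
    push_cast at this
    rw [intCoeff_natCast, coeff_derivative, this, mul_comm, Int.cast_natCast]

/-- The matrix entries of an element of `A₁` along a fixed diagonal, in the monomial basis,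
are the values of a polynomial. -/
lemma exists_eval_eq_intCoeff (a : A1) (i : ℤ) :
    ∃ p : ℂ[X], ∀ j : ℕ, intCoeff (j + i) (a.1 (X ^ j)) = p.eval (j : ℂ) := by
  let S : Submodule ℂ A1 :=
    { carrier := {a | ∀ i : ℤ, ∃ p : ℂ[X], ∀ j : ℕ,
        intCoeff (j + i) (a.1 (X ^ j)) = p.eval (j : ℂ)}
      zero_mem' := fun i => ⟨0, by simp⟩
      add_mem' := by
        intro a b ha hb i
        obtain ⟨p, hp⟩ := ha i
        obtain ⟨q, hq⟩ := hb i
        exact ⟨p + q, fun j => by simp [hp, hq]⟩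
      smul_mem' := by
        intro c a ha i
        obtain ⟨p, hp⟩ := ha i
        exact ⟨C c * p, fun j => by simp [hp]⟩ }
  have hS : S = ⊤ := by
    refine A1_submodule_eq_top S ?_ ?_ ?_
    · intro i
      refine ⟨if i = 0 then 1 else 0, fun j => ?_⟩
      change intCoeff (j + i) (X ^ j) = _
      rcases lt_or_ge ((j : ℤ) + i) 0 with hn | hn
      · rw [intCoeff_of_neg hn, if_neg (by omega), eval_zero]
      · obtain ⟨n, hn⟩ := Int.eq_ofNat_of_zero_le hn
        rw [hn, intCoeff_natCast, coeff_X_pow]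
        by_cases hi : i = 0
        · rw [if_pos (by omega), if_pos hi, eval_one]
        · rw [if_neg (by omega), if_neg hi, eval_zero]
    · intro s hs i
      obtain ⟨p, hp⟩ := hs (i - 1)
      refine ⟨p, fun j => ?_⟩
      change intCoeff (j + i) (X * s.1 (X ^ j)) = _
      rw [intCoeff_X_mul, ← hp, add_sub_assoc]
    · intro s hs i
      obtain ⟨p, hp⟩ := hs (i + 1)
      refine ⟨(X + C ((i : ℂ) + 1)) * p, fun j => ?_⟩
      change intCoeff (j + i) (derivative (s.1 (X ^ j))) = _
      rw [intCoeff_derivative, add_assoc (j : ℤ), hp]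
      simp [add_assoc]
  exact (hS ▸ Submodule.mem_top : a ∈ S) i

lemma wY_pow_apply (n : ℕ) (p : ℂ[X]) : (wY ^ n).1 p = X ^ n * p := by
  induction n with
  | zero => simp
  | succ n ih =>
    rw [pow_succ']
    change X * (wY ^ n).1 p = _
    rw [ih, pow_succ', mul_assoc]

lemma euler_add_apply_X_pow (c : ℂ) (j : ℕ) :
    (wY * wD + algebraMap ℂ A1 c).1 (X ^ j) = ((j : ℂ) + c) • (X ^ j : ℂ[X]) := by
  change X * derivative (X ^ j) + c • (X ^ j : ℂ[X]) = _
  rw [add_smul]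
  congr 1
  rcases j with _ | j
  · simp
  · rw [derivative_X_pow, Nat.add_sub_cancel, smul_eq_C_mul]
    ring

lemma span_euler_add_pow_ne_top {m : ℕ} (hm : 0 < m) :
    (Ideal.span {wY * wD + algebraMap ℂ A1 m, wY ^ m} : Ideal A1) ≠ ⊤ := by
  rw [Ne, Ideal.eq_top_iff_one, Ideal.mem_span_pair]
  rintro ⟨a, b, hab⟩
  obtain ⟨p, hp⟩ := exists_eval_eq_intCoeff a 0
  obtain ⟨q, hq⟩ := exists_eval_eq_intCoeff b (-m)
  have hq0 : q.eval 0 = 0 := by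
    have := hq 0
    rw [intCoeff_of_neg (by simpa using hm)] at this
    simpa using this.symm
  have hval (j : ℕ) : (p * (X + C (m : ℂ)) + q.comp (X + C (m : ℂ))).eval (j : ℂ)
      = (1 : ℂ[X]).eval (j : ℂ) := by
    have hj : a.1 ((wY * wD + algebraMap ℂ A1 m).1 (X ^ j)) + b.1 ((wY ^ m).1 (X ^ j))
        = X ^ j := congrArg (fun x : A1 => x.1 (X ^ j)) hab
    rw [euler_add_apply_X_pow, wY_pow_apply, ← pow_add, map_smul] at hj
    have hcoeff := congrArg (intCoeff j) hj
    have hp' := hp j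
    have hq' := hq (m + j)
    rw [add_zero] at hp'
    rw [Nat.cast_add, add_neg_cancel_comm] at hq'
    rw [map_add, map_smul, hp', hq', intCoeff_natCast, coeff_X_pow_self] at hcoeff
    simp only [eval_add, eval_mul, eval_comp, eval_X, eval_C, eval_one]
    rw [← hcoeff, smul_eq_mul]
    push_cast
    ring_nf
  have hpoly : p * (X + C (m : ℂ)) + q.comp (X + C (m : ℂ)) = 1 :=
    Polynomial.eq_of_infinite_eval_eq _ _ <|
      (Set.infinite_range_of_injective (Nat.cast_injective (R := ℂ))).mono <| by
        rintro _ ⟨j, rfl⟩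
        exact hval j
  have := congrArg (eval (-(m : ℂ))) hpoly
  simp [hq0] at this

/-- for `k ≥ 1` and an integer `γ` with `−k ≤ γ ≤ −1`, the left ideal
`J = A₁(Y∂ − γ) + A₁Y^k` satisfies `J = A₁(Y∂ − γ) + A₁Y^{|γ|}`, and `J` is a maximal left
ideal of `A₁` (equivalently, `A₁/J` is a simple `A₁`-module; it is isomorphic to
`ℂ[y]_y/ℂ[y]`). -/
theorem stmt15 (k : ℕ) (hk : 1 ≤ k) (γ : ℤ) (h1 : -(k : ℤ) ≤ γ) (h2 : γ ≤ -1)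
    (J : Ideal A1)
    (hJ : J = Ideal.span {wY * wD - algebraMap ℂ A1 (γ : ℂ), wY ^ k}) :
    J = Ideal.span {wY * wD - algebraMap ℂ A1 (γ : ℂ), wY ^ γ.natAbs} ∧ J.IsMaximal := by
  obtain ⟨r, rfl⟩ : ∃ r : ℕ, γ = -((r + 1 : ℕ) : ℤ) := ⟨γ.natAbs - 1, by omega⟩
  obtain ⟨n, rfl⟩ : ∃ n : ℕ, k = r + 1 + n := ⟨k - (r + 1), by omega⟩
  rw [Int.natAbs_neg, Int.natAbs_natCast]
  have hEuler : wY * wD - algebraMap ℂ A1 ((-((r + 1 : ℕ) : ℤ) : ℤ) : ℂ)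
      = wY * wD + algebraMap ℂ A1 ((r + 1 : ℕ) : ℂ) := by
    rw [Int.cast_neg, Int.cast_natCast, map_neg, sub_neg_eq_add]
  rw [hEuler] at hJ ⊢
  have hspan : J = Ideal.span {wY * wD + algebraMap ℂ A1 ((r + 1 : ℕ) : ℂ), wY ^ (r + 1)} :=
    hJ.trans (span_euler_pow_add (A := A1) wD_mul_wY (r + 1) n)
  refine ⟨hspan, ?_⟩
  rw [hspan]
  exact isMaximal_of_weyl (A := A1) wD_mul_wY rfl (Ideal.subset_span (Set.mem_insert _ _))
    (Ideal.subset_span (Set.mem_insert_of_mem _ rfl)) (span_euler_add_pow_ne_top r.succ_pos) A1_submodule_eq_top
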